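/- (Weak duality for the semilinear second order continuous problem, Example 5.1.) Let A₀, A₁ be n×n matrices, B an n×r matrix, U ⊆ ℝʳ nonempty, Q₀, Q₁ ⊆ ℝⁿ, and φ : ℝⁿ × ℝⁿ → ℝ ∪ {+∞}. Let x : [0,1] → ℝⁿ with x, x' absolutely continuous, x'' ∈ L¹, satisfy x''(t) = A₀x(t) + A₁x'(t) + Bu(t) for a.e. t with u(t) ∈ U, x(0) ∈ Q₀, x'(0) ∈ Q₁. Let x* : [0,1] → ℝⁿ with x*, x*' absolutely continuous and x*'' ∈ L¹ satisfy the adjoint equation x*''(t) = A₀ᵀx*(t) − A₁ᵀx*'(t) for a.e. t ∈ [0,1], and assume t ↦ W_U(Bᵀx*(t)) is real-valued a.e. and Lebesgue integrable on [0,1]. Then φ(x(1), x'(1)) ≥ −φ*(A₁ᵀx*(1) + x*'(1), −x*(1)) − ∫₀¹ W_U(Bᵀx*(t)) dt − W_{Q₀}(−A₁ᵀx*(0) − x*'(0)) − W_{Q₁}(x*(0)), as an inequality in ℝ ∪ {±∞}. -/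

import Mathlib

open scoped RealInnerProductSpace Pointwise
open MeasureTheory Matrix

noncomputable section

abbrev En (n : ℕ) := EuclideanSpace ℝ (Fin n)

/-- Fenchel conjugate of an extended-real-valued function on a product of two
inner product spaces (inner product of pairs is the sum of componentwise inner products). -/
def fconj2 {V W : Type*} [NormedAddCommGroup V] [InnerProductSpace ℝ V]
    [NormedAddCommGroup W] [InnerProductSpace ℝ W]
    (g : V × W → EReal) (u : V) (w : W) : EReal :=
  ⨆ p : V × W, ((⟪p.1, u⟫ + ⟪p.2, w⟫ : ℝ) : EReal) - g p

/-- Fenchel conjugate on a triple product. -/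
def fconj3 {V : Type*} [NormedAddCommGroup V] [InnerProductSpace ℝ V]
    (g : V × V × V → EReal) (u₁ u₂ u₃ : V) : EReal :=
  ⨆ p : V × V × V,
    ((⟪p.1, u₁⟫ + ⟪p.2.1, u₂⟫ + ⟪p.2.2, u₃⟫ : ℝ) : EReal) - g p

/-- Fenchel conjugate on a finite power of an inner product space. -/
def fconjPi {N : ℕ} {V : Type*} [NormedAddCommGroup V] [InnerProductSpace ℝ V]
    (g : (Fin N → V) → EReal) (u : Fin N → V) : EReal :=
  ⨆ w : Fin N → V, ((∑ i, ⟪w i, u i⟫ : ℝ) : EReal) - g w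

/-- Support function `W_A`. -/
def suppFn {V : Type*} [NormedAddCommGroup V] [InnerProductSpace ℝ V]
    (A : Set V) (u : V) : EReal :=
  ⨆ x ∈ A, ((⟪x, u⟫ : ℝ) : EReal)

/-- The function `M_F(x*,y*,z*) = inf {⟨x,x*⟩+⟨y,y*⟩-⟨z,z*⟩ : (x,y,z) ∈ gph F}`. -/
def MF {V : Type*} [NormedAddCommGroup V] [InnerProductSpace ℝ V]
    (F : V → V → Set V) (x' y' z' : V) : EReal :=
  ⨅ (x : V) (y : V) (z : V) (_ : z ∈ F x y),
    ((⟪x, x'⟫ + ⟪y, y'⟫ - ⟪z, z'⟫ : ℝ) : EReal)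

/-- Hamiltonian `H_F(x,y,z*) = sup {⟨z,z*⟩ : z ∈ F(x,y)}` (`⊥` if `F(x,y) = ∅`). -/
def HF {V : Type*} [NormedAddCommGroup V] [InnerProductSpace ℝ V]
    (F : V → V → Set V) (x y z' : V) : EReal :=
  ⨆ z ∈ F x y, ((⟪z, z'⟫ : ℝ) : EReal)

/-- Locally adjoint mapping `F*(z*;(x,y,·))`. -/
def LAM {V : Type*} [NormedAddCommGroup V] [InnerProductSpace ℝ V]
    (F : V → V → Set V) (z' x y : V) : Set (V × V) :=
  {p | ∀ x₁ y₁ : V, HF F x₁ y₁ z' - HF F x y z' ≤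
    ((⟪p.1, x₁ - x⟫ + ⟪p.2, y₁ - y⟫ : ℝ) : EReal)}

/-- Argmaximum set `F_A(x,y,z*)`. -/
def FA {V : Type*} [NormedAddCommGroup V] [InnerProductSpace ℝ V]
    (F : V → V → Set V) (x y z' : V) : Set V :=
  {z ∈ F x y | ((⟪z, z'⟫ : ℝ) : EReal) = HF F x y z'}

/-- Subdifferential of an extended-real-valued function on a product of two spaces. -/
def subdiff2 {V W : Type*} [NormedAddCommGroup V] [InnerProductSpace ℝ V]
    [NormedAddCommGroup W] [InnerProductSpace ℝ W]
    (g : V × W → EReal) (u : V × W) : Set (V × W) :=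
  {p | ∀ v : V × W,
    ((⟪p.1, v.1 - u.1⟫ + ⟪p.2, v.2 - u.2⟫ : ℝ) : EReal) ≤ g v - g u}

/-- Subdifferential of a real-valued function on a product of two spaces. -/
def subdiffR2 {V W : Type*} [NormedAddCommGroup V] [InnerProductSpace ℝ V]
    [NormedAddCommGroup W] [InnerProductSpace ℝ W]
    (g : V × W → ℝ) (u : V × W) : Set (V × W) :=
  {p | ∀ v : V × W, ⟪p.1, v.1 - u.1⟫ + ⟪p.2, v.2 - u.2⟫ ≤ g v - g u}

/-- Dual cone to the cone of tangent directions of a convex set `Q` at `x₀`. -/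
def Kstar {V : Type*} [NormedAddCommGroup V] [InnerProductSpace ℝ V]
    (Q : Set V) (x₀ : V) : Set V :=
  {x' | ∀ x ∈ Q, 0 ≤ ⟪x', x - x₀⟫}

/-- Graph of a set-valued mapping. -/
def gph {V : Type*} (F : V → V → Set V) : Set (V × V × V) :=
  {p | p.2.2 ∈ F p.1 p.2.1}

/-- Convexity of an extended-real-valued function. -/
def ERealConvexOn {V : Type*} [AddCommGroup V] [Module ℝ V] (g : V → EReal) : Prop :=
  ∀ x y : V, ∀ a b : ℝ, 0 ≤ a → 0 ≤ b → a + b = 1 →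
    g (a • x + b • y) ≤ (a : EReal) * g x + (b : EReal) * g y

/-- `g` is absolutely continuous on `[0,1]` with derivative `g' ∈ L¹`. -/
def AC {n : ℕ} (g g' : ℝ → En n) : Prop :=
  MeasureTheory.IntegrableOn g' (Set.Icc (0 : ℝ) 1) ∧
    ∀ t ∈ Set.Icc (0 : ℝ) 1, g t = g 0 + ∫ s in (0 : ℝ)..t, g' s

/-- Feasible trajectory of the continuous problem `(P_C)`. -/
structure FeasTraj {n : ℕ} (F : ℝ → En n → En n → Set (En n)) (Q₀ Q₁ : Set (En n))
    (x x' x'' : ℝ → En n) : Prop where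
  int' : MeasureTheory.IntegrableOn x' (Set.Icc (0 : ℝ) 1)
  int'' : MeasureTheory.IntegrableOn x'' (Set.Icc (0 : ℝ) 1)
  hx : ∀ t ∈ Set.Icc (0 : ℝ) 1, x t = x 0 + ∫ s in (0 : ℝ)..t, x' s
  hx' : ∀ t ∈ Set.Icc (0 : ℝ) 1, x' t = x' 0 + ∫ s in (0 : ℝ)..t, x'' s
  incl : ∀ᵐ t ∂(MeasureTheory.volume.restrict (Set.Icc (0 : ℝ) 1)), x'' t ∈ F t (x t) (x' t)
  q0 : x 0 ∈ Q₀
  q1 : x' 0 ∈ Q₁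


lemma sc_parts {f f' g g' : ℝ → ℝ}
    (hf' : IntegrableOn f' (Set.Icc (0 : ℝ) 1))
    (hf : ∀ t ∈ Set.Icc (0 : ℝ) 1, f t = f 0 + ∫ s in (0 : ℝ)..t, f' s)
    (hg' : IntegrableOn g' (Set.Icc (0 : ℝ) 1))
    (hg : ∀ t ∈ Set.Icc (0 : ℝ) 1, g t = g 0 + ∫ s in (0 : ℝ)..t, g' s) :
    IntegrableOn (fun t => f' t * g t + f t * g' t) (Set.Icc (0 : ℝ) 1) ∧
      ∫ t in Set.Icc (0 : ℝ) 1, (f' t * g t + f t * g' t) = f 1 * g 1 - f 0 * g 0 := by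
  have h01 : (0 : ℝ) ≤ 1 := zero_le_one
  have hfi : IntervalIntegrable f' volume 0 1 :=
    (intervalIntegrable_iff_integrableOn_Icc_of_le h01).2 hf'
  have hgi : IntervalIntegrable g' volume 0 1 :=
    (intervalIntegrable_iff_integrableOn_Icc_of_le h01).2 hg'
  set F : ℝ → ℝ := fun t => f 0 + ∫ s in (0 : ℝ)..t, f' s with hF
  set G : ℝ → ℝ := fun t => g 0 + ∫ s in (0 : ℝ)..t, g' s with hG
  have hconst : ∀ c : ℝ, AbsolutelyContinuousOnInterval (fun _ : ℝ => c) 0 1 := fun c =>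
    (contDiff_const.contDiffOn).absolutelyContinuousOnInterval
  have hFA : AbsolutelyContinuousOnInterval F 0 1 :=
    (hconst (f 0)).fun_add
      (hfi.absolutelyContinuousOnInterval_intervalIntegral (c := 0) (by simp))
  have hGA : AbsolutelyContinuousOnInterval G 0 1 :=
    (hconst (g 0)).fun_add
      (hgi.absolutelyContinuousOnInterval_intervalIntegral (c := 0) (by simp))
  have hFc : ContinuousOn f (Set.Icc 0 1) := by
    have := hFA.continuousOn
    rw [Set.uIcc_of_le h01] at this
    exact this.congr hf
  have hGc : ContinuousOn g (Set.Icc 0 1) := by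
    have := hGA.continuousOn
    rw [Set.uIcc_of_le h01] at this
    exact this.congr hg
  have key := hFA.integral_deriv_mul_eq_sub hGA
  have hcong : ∫ t in (0 : ℝ)..1, (f' t * g t + f t * g' t)
      = ∫ t in (0 : ℝ)..1, (deriv F t * G t + F t * deriv G t) := by
    apply intervalIntegral.integral_congr_ae
    filter_upwards [hfi.ae_hasDerivAt_integral, hgi.ae_hasDerivAt_integral] with t h1 h2 ht
    have ht' : t ∈ Set.uIcc (0 : ℝ) 1 := Set.uIoc_subset_uIcc ht
    have ht'' : t ∈ Set.Icc (0 : ℝ) 1 := by rwa [Set.uIcc_of_le h01] at ht'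
    have e1 : deriv F t = f' t := ((h1 ht' 0 (by simp)).const_add (f 0)).deriv
    have e2 : deriv G t = g' t := ((h2 ht' 0 (by simp)).const_add (g 0)).deriv
    rw [e1, e2, hf t ht'', hg t ht'']
  refine ⟨?_, ?_⟩
  · rw [← intervalIntegrable_iff_integrableOn_Icc_of_le h01]
    rw [← Set.uIcc_of_le h01] at hFc hGc
    exact (hfi.mul_continuousOn hGc).add (hgi.continuousOn_mul hFc)
  · rw [integral_Icc_eq_integral_Ioc, ← intervalIntegral.integral_of_le h01, hcong, key,
      hf 1 (by simp), hg 1 (by simp)]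
    simp [hF, hG]

lemma AC.coord {n : ℕ} {f f' : ℝ → En n} (h : AC f f') (i : Fin n) :
    IntegrableOn (fun t => f' t i) (Set.Icc (0 : ℝ) 1) ∧
    ∀ t ∈ Set.Icc (0 : ℝ) 1, f t i = f 0 i + ∫ s in (0 : ℝ)..t, f' s i := by
  refine ⟨(EuclideanSpace.proj (𝕜 := ℝ) i).integrable_comp h.1, fun t ht => ?_⟩
  have hi : IntervalIntegrable f' volume 0 t :=
    (intervalIntegrable_iff_integrableOn_Icc_of_le ht.1).2
      (h.1.mono_set (Set.Icc_subset_Icc le_rfl ht.2))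
  have e := (EuclideanSpace.proj i : En n →L[ℝ] ℝ).intervalIntegral_comp_comm hi
  have e2 := congrArg (fun v : En n => v i) (h.2 t ht)
  simp only [PiLp.add_apply] at e2
  rw [e2]
  congr 1
  exact e.symm

lemma AC.map {n m : ℕ} {f f' : ℝ → En n} (h : AC f f') (L : En n →ₗ[ℝ] En m) :
    AC (fun t => L (f t)) (fun t => L (f' t)) := by
  set L' := LinearMap.toContinuousLinearMap L with hL'
  refine ⟨L'.integrable_comp h.1, fun t ht => ?_⟩
  have hi : IntervalIntegrable f' volume 0 t :=
    (intervalIntegrable_iff_integrableOn_Icc_of_le ht.1).2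
      (h.1.mono_set (Set.Icc_subset_Icc le_rfl ht.2))
  have e := L'.intervalIntegral_comp_comm hi
  simp only
  rw [h.2 t ht, map_add]
  congr 1
  exact e.symm

lemma AC.parts {n : ℕ} {f f' g g' : ℝ → En n} (hf : AC f f') (hg : AC g g') :
    IntegrableOn (fun t => ⟪f' t, g t⟫ + ⟪f t, g' t⟫) (Set.Icc (0 : ℝ) 1) ∧
      ∫ t in Set.Icc (0 : ℝ) 1, (⟪f' t, g t⟫ + ⟪f t, g' t⟫) = ⟪f 1, g 1⟫ - ⟪f 0, g 0⟫ := by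
  have hs := fun i => sc_parts (hf.coord i).1 (hf.coord i).2 (hg.coord i).1 (hg.coord i).2
  have e : (fun t => ⟪f' t, g t⟫ + ⟪f t, g' t⟫)
      = fun t => ∑ i, (f' t i * g t i + f t i * g' t i) := by
    funext t
    simp only [PiLp.inner_apply, RCLike.inner_apply, conj_trivial, ← Finset.sum_add_distrib]
    exact Finset.sum_congr rfl fun i _ => by ring
  rw [e]
  refine ⟨integrable_finsetSum _ fun i _ => (hs i).1, ?_⟩
  rw [integral_finsetSum _ fun i _ => (hs i).1]
  simp only [(hs _).2, PiLp.inner_apply, RCLike.inner_apply, conj_trivial,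
    ← Finset.sum_sub_distrib]
  exact Finset.sum_congr rfl fun i _ => by ring

lemma toE_adj {n m : ℕ} (A : Matrix (Fin n) (Fin m) ℝ) (x : En m) (y : En n) :
    ⟪x, Matrix.toEuclideanLin Aᵀ y⟫ = ⟪Matrix.toEuclideanLin A x, y⟫ := by
  have : Aᵀ = Aᴴ := by simp [Matrix.conjTranspose_eq_transpose_of_trivial]
  rw [this, Matrix.toEuclideanLin_conjTranspose_eq_adjoint, LinearMap.adjoint_inner_right]

lemma le_suppFn {V : Type*} [NormedAddCommGroup V] [InnerProductSpace ℝ V]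
    {A : Set V} {x : V} (hx : x ∈ A) (u : V) : ((⟪x, u⟫ : ℝ) : EReal) ≤ suppFn A u :=
  le_iSup₂ (f := fun x (_ : x ∈ A) => ((⟪x, u⟫ : ℝ) : EReal)) x hx

lemma ereal_fin (F P W0 W1 : EReal) (c I a b : ℝ) (hF : (c : EReal) - P ≤ F)
    (h0 : (a : EReal) ≤ W0) (h1 : (b : EReal) ≤ W1) (hI : -c - a - b ≤ I) :
    -F - (I : EReal) - W0 - W1 ≤ P := by
  have s1 : -F - (I : EReal) - W0 - W1 ≤ -((c : EReal) - P) - (I : EReal) - a - b :=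
    EReal.sub_le_sub (EReal.sub_le_sub (EReal.sub_le_sub (EReal.neg_le_neg_iff.2 hF) le_rfl) h0) h1
  refine s1.trans ?_
  induction P with
  | bot => simp
  | top => exact le_top
  | coe p =>
    norm_cast
    linarith

/-- weak duality for the semilinear second order continuous problem
(Example 5.1).  Here `xs, xs', xs''` stand for `x*, x*', x*''` and `g` is the a.e.
real value of `t ↦ W_U(Bᵀ x*(t))`. -/
theorem stmt19 {n r : ℕ}
    (A₀ A₁ : Matrix (Fin n) (Fin n) ℝ) (B : Matrix (Fin n) (Fin r) ℝ)
    (U : Set (En r)) (hU : U.Nonempty) (Q₀ Q₁ : Set (En n))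
    (φ : En n × En n → EReal)
    (x x' x'' : ℝ → En n) (u : ℝ → En r)
    (hxAC : AC x x') (hx'AC : AC x' x'')
    (hdyn : ∀ᵐ t ∂(volume.restrict (Set.Icc (0 : ℝ) 1)),
      u t ∈ U ∧ x'' t = Matrix.toEuclideanLin A₀ (x t) +
        Matrix.toEuclideanLin A₁ (x' t) + Matrix.toEuclideanLin B (u t))
    (hq0 : x 0 ∈ Q₀) (hq1 : x' 0 ∈ Q₁)
    (xs xs' xs'' : ℝ → En n)
    (hxsAC : AC xs xs') (hxs'AC : AC xs' xs'')
    (hadj : ∀ᵐ t ∂(volume.restrict (Set.Icc (0 : ℝ) 1)),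
      xs'' t = Matrix.toEuclideanLin A₀ᵀ (xs t) - Matrix.toEuclideanLin A₁ᵀ (xs' t))
    (g : ℝ → ℝ) (hg : MeasureTheory.IntegrableOn g (Set.Icc (0 : ℝ) 1))
    (hrepr : ∀ᵐ t ∂(volume.restrict (Set.Icc (0 : ℝ) 1)),
      suppFn U (Matrix.toEuclideanLin Bᵀ (xs t)) = ((g t : ℝ) : EReal)) :
    -(fconj2 φ (Matrix.toEuclideanLin A₁ᵀ (xs 1) + xs' 1) (-(xs 1)))
      - (((∫ t in Set.Icc (0 : ℝ) 1, g t) : ℝ) : EReal)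
      - suppFn Q₀ (-(Matrix.toEuclideanLin A₁ᵀ (xs 0)) - xs' 0) - suppFn Q₁ (xs 0)
      ≤ φ (x 1, x' 1) := by
  have p1 := hx'AC.parts hxsAC
  have p2 := hxAC.parts hxs'AC
  have p3 := (hxAC.map (Matrix.toEuclideanLin A₁)).parts hxsAC
  have hle : ∫ t in Set.Icc (0 : ℝ) 1, ((⟪x'' t, xs t⟫ + ⟪x' t, xs' t⟫)
      - (⟪x' t, xs' t⟫ + ⟪x t, xs'' t⟫)
      - (⟪Matrix.toEuclideanLin A₁ (x' t), xs t⟫ + ⟪Matrix.toEuclideanLin A₁ (x t), xs' t⟫))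
      ≤ ∫ t in Set.Icc (0 : ℝ) 1, g t := by
    refine integral_mono_ae ((p1.1.sub p2.1).sub p3.1) hg ?_
    filter_upwards [hdyn, hadj, hrepr] with t h1 h2 h3
    have h4 := le_suppFn h1.1 (Matrix.toEuclideanLin Bᵀ (xs t))
    rw [h3, EReal.coe_le_coe_iff, toE_adj] at h4
    rw [h1.2, h2]
    simp only [inner_add_left, inner_sub_right, toE_adj]
    linarith
  have p12 : IntegrableOn (fun t => (⟪x'' t, xs t⟫ + ⟪x' t, xs' t⟫)
      - (⟪x' t, xs' t⟫ + ⟪x t, xs'' t⟫)) (Set.Icc (0 : ℝ) 1) := p1.1.sub p2.1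
  rw [integral_sub p12 p3.1, integral_sub p1.1 p2.1, p1.2, p2.2, p3.2] at hle
  refine ereal_fin _ _ _ _
    (⟪x 1, Matrix.toEuclideanLin A₁ᵀ (xs 1) + xs' 1⟫ + ⟪x' 1, -(xs 1)⟫) _ _ _
    (le_iSup (fun p : En n × En n => ((⟪p.1, Matrix.toEuclideanLin A₁ᵀ (xs 1) + xs' 1⟫
      + ⟪p.2, -(xs 1)⟫ : ℝ) : EReal) - φ p) (x 1, x' 1))
    (le_suppFn hq0 _) (le_suppFn hq1 _) ?_
  simp only [inner_add_right, inner_sub_right, inner_neg_right, toE_adj]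
  linarith
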